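/- Let n ≥ 2 and let λ_0, …, λ_{n-1} be elements of a commutative ring. Consider the 2-form α = ∑_{i=0}^{n-1} λ_i dz^{2i} ∧ dz^{2i+1} in the exterior algebra on 2n generators dz^0, …, dz^{2n-1}. Then α^{n-1} = (n-1)! · ∑_{i=0}^{n-1} (∏_{j≠i} λ_j) · dz^0 ∧ dz^1 ∧ … ∧ (omit dz^{2i} and dz^{2i+1}) ∧ … ∧ dz^{2n-1}, and consequently Pf(α^{n-1}) = Pf(α)^{n-1}, where Pf(α^{n-1}) is defined as the Pfaffian of (1/(n-1)!) ∗ α^{n-1} and Pf(α) = ∏ λ_i. -/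

import Mathlib

open Finset

theorem aux_add_pow {S : Type*} [CommRing S] (a b : S) (ha : a * a = 0) (k : ℕ) :
    (a + b) ^ (k + 1) = b ^ (k + 1) + (k + 1 : ℕ) * (a * b ^ k) := by
  induction k with
  | zero => simp [add_comm]
  | succ k ih =>
    rw [pow_succ, ih]
    push_cast
    linear_combination ((k : S) + 1) * b ^ k * ha

theorem aux_sum_pow {S ι : Type*} [CommRing S] [DecidableEq ι] (x : ι → S)
    (hx : ∀ i, x i * x i = 0) (s : Finset ι) (k : ℕ) :
    (∑ i ∈ s, x i) ^ k = (k.factorial : S) * ∑ t ∈ s.powersetCard k, ∏ i ∈ t, x i := by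
  induction s using Finset.induction_on generalizing k with
  | empty =>
    cases k with
    | zero => simp
    | succ k => rw [Finset.powersetCard_eq_empty.2 (by simp)]; simp
  | insert a s has ih =>
    cases k with
    | zero => simp
    | succ k =>
      rw [Finset.sum_insert has, aux_add_pow _ _ (hx a), ih, ih, Finset.powersetCard_succ_insert has,
        Finset.sum_union, Finset.sum_image]
      · have : ∑ t ∈ s.powersetCard k, ∏ i ∈ insert a t, x i
            = x a * ∑ t ∈ s.powersetCard k, ∏ i ∈ t, x i := by
          rw [Finset.mul_sum]
          refine Finset.sum_congr rfl fun t ht => ?_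
          rw [Finset.prod_insert]
          exact fun h => has ((Finset.mem_powersetCard.1 ht).1 h)
        rw [this, Nat.factorial_succ]
        push_cast
        ring
      · intro t ht u hu h
        have h1 : a ∉ t := fun h => has ((Finset.mem_powersetCard.1 ht).1 h)
        have h2 : a ∉ u := fun h => has ((Finset.mem_powersetCard.1 hu).1 h)
        rw [← Finset.erase_insert h1, ← Finset.erase_insert h2]
        exact congrArg (fun v => Finset.erase v a) h
      · rw [Finset.disjoint_left]
        intro t ht hu
        obtain ⟨u, _, rfl⟩ := Finset.mem_image.1 hu
        exact has ((Finset.mem_powersetCard.1 ht).1 (Finset.mem_insert_self a u))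

theorem aux_sum_powersetCard {S : Type*} [CommRing S] (n : ℕ) (hn : 1 ≤ n)
    (f : Finset (Fin n) → S) :
    ∑ t ∈ (univ : Finset (Fin n)).powersetCard (n - 1), f t = ∑ i : Fin n, f (univ.erase i) := by
  symm
  refine Finset.sum_bij (fun i _ => univ.erase i) ?_ ?_ ?_ ?_
  · intro i _
    simp [Finset.mem_powersetCard]
  · intro i _ j _ h
    by_contra hij
    have : i ∈ univ.erase j := by simp [hij]
    rw [← h] at this
    simp at this
  · intro t ht
    have hc : tᶜ.card = 1 := by
      rw [Finset.card_compl, (Finset.mem_powersetCard.1 ht).2, Fintype.card_fin]; omega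
    obtain ⟨i, hi⟩ := Finset.card_eq_one.1 hc
    refine ⟨i, mem_univ _, ?_⟩
    rw [← compl_compl t, hi]
    ext; simp
  · intros; rfl

theorem aux_list {A : Type*} [Monoid A] {β : Type*} (L : List β) (p : β → Bool) (f : β → A) :
    ((L.filter p).map f).prod = (L.map fun k => if p k then f k else 1).prod := by
  induction L with
  | nil => simp
  | cons a L ih =>
    by_cases h : p a <;> simp [h, ih]

theorem aux_comm {R A : Type*} [CommRing R] [Ring A] [Algebra R A] (n : ℕ) (hn : 1 ≤ n)
    (l : Fin n → R) (w : Fin n → A) (hc : ∀ i j, w i * w j = w j * w i)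
    (hw : ∀ i, w i * w i = 0) :
    (∑ i, l i • w i) ^ (n - 1) = (Nat.factorial (n - 1) : R) •
      ∑ i : Fin n, (∏ j ∈ Finset.univ.erase i, l j) •
        ((List.finRange n).map fun k => if k ≠ i then w k else 1).prod := by
  have hcomm : ∀ a ∈ Set.range w, ∀ b ∈ Set.range w, a * b = b * a := by
    rintro _ ⟨i, rfl⟩ _ ⟨j, rfl⟩; exact hc i j
  letI : CommRing (Algebra.adjoin R (Set.range w)) := Algebra.adjoinCommRingOfComm R hcomm
  let W : Fin n → Algebra.adjoin R (Set.range w) :=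
    fun i => ⟨w i, Algebra.subset_adjoin ⟨i, rfl⟩⟩
  have hW : ∀ i, W i * W i = 0 := fun i => Subtype.ext (hw i)
  have key := aux_sum_pow (fun i => l i • W i)
    (fun i => by
      show (l i • W i) * (l i • W i) = 0
      rw [smul_mul_smul_comm, hW, smul_zero]) univ (n - 1)
  rw [aux_sum_powersetCard n hn] at key
  have key2 := congrArg (Algebra.adjoin R (Set.range w)).val key
  have hl : ∀ i : Fin n, (Algebra.adjoin R (Set.range w)).val (∏ j ∈ univ.erase i, l j • W j)
      = (∏ j ∈ Finset.univ.erase i, l j) •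
        ((List.finRange n).map fun k => if k ≠ i then w k else 1).prod := by
    intro i
    have h1 : ∏ j ∈ univ.erase i, l j • W j
       = (∏ j ∈ univ.erase i, l j) • ((List.finRange n).map fun k => if k ≠ i then W k else 1).prod := by
      rw [Finset.prod_smul]
      congr 1
      rw [← List.ofFn_eq_map, List.prod_ofFn, ← Finset.prod_filter]
      congr 1
      ext; simp
    rw [h1, map_smul, map_list_prod, List.map_map]
    congr 3
    ext k
    by_cases h : k = i <;> simp [h, W]
  rw [map_pow, map_sum, map_mul, map_sum, map_natCast] at key2
  simp only [hl] at key2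
  rw [← nsmul_eq_mul, ← Nat.cast_smul_eq_nsmul R] at key2
  exact key2

theorem stmt_12 {R : Type*} [CommRing R] (n : ℕ) (hn : 2 ≤ n) (l : Fin n → R)
    (dz : Fin (2 * n) → ExteriorAlgebra R (Fin (2 * n) → R))
    (hdz : ∀ k, dz k = ExteriorAlgebra.ι R (Pi.single k (1 : R)))
    (α : ExteriorAlgebra R (Fin (2 * n) → R))
    (hα : α = ∑ i : Fin n,
      l i • (dz ⟨2 * i, by omega⟩ * dz ⟨2 * i + 1, by omega⟩)) :
    α ^ (n - 1)
      = (Nat.factorial (n - 1) : R) •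
          ∑ i : Fin n, (∏ j ∈ Finset.univ.erase i, l j) •
            (((List.finRange (2 * n)).filter
                (fun k => k ≠ (⟨2 * i, by omega⟩ : Fin (2 * n)) ∧
                          k ≠ (⟨2 * i + 1, by omega⟩ : Fin (2 * n)))).map dz).prod
    ∧ ∏ i : Fin n, (∏ j ∈ Finset.univ.erase i, l j) = (∏ i, l i) ^ (n - 1) := by
  constructor
  · have anti : ∀ a b, dz a * dz b = - (dz b * dz a) := by
      intro a b
      rw [hdz, hdz]
      exact eq_neg_of_add_eq_zero_left (ExteriorAlgebra.ι_add_mul_swap _ _)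
    have sq : ∀ a, dz a * dz a = 0 := by
      intro a; rw [hdz]; exact ExteriorAlgebra.ι_sq_zero _
    have comm2 : ∀ a b c, (dz a * dz b) * dz c = dz c * (dz a * dz b) := by
      intro a b c
      rw [mul_assoc, anti b c, mul_neg, ← mul_assoc, anti a c, neg_mul, neg_neg, mul_assoc]
    have main := aux_comm n (by omega) l
      (fun i : Fin n => dz ⟨2 * i, by omega⟩ * dz ⟨2 * i + 1, by omega⟩)
      (fun i j => by
        show _ * (dz _ * dz _) = (dz _ * dz _) * _
        rw [← mul_assoc, comm2, mul_assoc, comm2, ← mul_assoc])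
      (fun i => by
        show _ * (dz _ * dz _) = 0
        rw [← mul_assoc, comm2, ← mul_assoc, sq, zero_mul, zero_mul])
    rw [hα, main]
    congr 1
    refine Finset.sum_congr rfl fun i _ => ?_
    congr 1
    rw [aux_list, ← List.ofFn_eq_map, ← List.ofFn_eq_map, List.ofFn_mul', List.prod_flatten,
      List.map_ofFn]
    congr 2
    ext k
    by_cases h : k = i
    · subst h
      simp [List.ofFn_succ]
    · have h' : (k : ℕ) ≠ i := fun e => h (Fin.ext e)
      have h1 : 2 * (k : ℕ) ≠ 2 * i + 1 := by omega
      have h2 : 2 * (k : ℕ) + 1 ≠ 2 * i := by omega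
      simp [List.ofFn_succ, h, h', h1, h2]
  · rw [Finset.prod_comm' (t' := univ) (s' := fun j => univ.erase j)
      (by intro x y; simp [eq_comm])]
    simp [Finset.prod_pow]
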